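/- arXiv:1412.3766 — 2 statements merged into one kernel-verified Lean document; each statement's English description precedes it below -/
import Mathlib

section
/- Let σ be a cone in N_ℝ of dimension k+1 mapping under p onto a cone τ of dimension k in Q_ℝ, where p: N_ℝ → Q_ℝ has kernel L_ℝ and faces of σ map onto faces of τ. Then span(σ) ∩ L_ℝ is one-dimensional, and σ has exactly one or exactly two faces mapping isomorphically onto τ. -/
open Set

/-- The standard integer lattice (as a set) in `Fin n → ℝ`. -/
def lattSet (n : ℕ) : Set (Fin n → ℝ) := {x | ∀ i, ∃ m : ℤ, x i = m}

/-- The convex cone generated by a finite set of vectors. -/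
def coneGen {V : Type*} [AddCommGroup V] [Module ℝ V] (s : Finset V) : Set V :=
  {x | ∃ c : V → ℝ, (∀ v, 0 ≤ c v) ∧ x = ∑ v ∈ s, c v • v}

/-- A (finitely generated) polyhedral convex cone. -/
def IsPolyCone {V : Type*} [AddCommGroup V] [Module ℝ V] (C : Set V) : Prop :=
  ∃ s : Finset V, C = coneGen s

/-- A rational polyhedral cone: generated by finitely many lattice vectors. -/
def IsRatPolyCone {n : ℕ} (C : Set (Fin n → ℝ)) : Prop :=
  ∃ s : Finset (Fin n → ℝ), (↑s : Set (Fin n → ℝ)) ⊆ lattSet n ∧ C = coneGen s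

/-- `F` is a face of the cone `σ`: a subcone such that whenever a sum of two
elements of `σ` lies in `F`, both elements lie in `F`. -/
def IsFace {V : Type*} [AddCommGroup V] [Module ℝ V] (σ F : Set V) : Prop :=
  F ⊆ σ ∧ ∀ x ∈ σ, ∀ y ∈ σ, x + y ∈ F → x ∈ F ∧ y ∈ F

/-- A fan: a collection of strongly convex polyhedral cones such that the
intersection of any two members is a member and is a face of each. -/
def IsFan {V : Type*} [AddCommGroup V] [Module ℝ V] (F : Set (Set V)) : Prop :=
  (∀ C ∈ F, IsPolyCone C) ∧
  (∀ C ∈ F, ∀ x ∈ C, -x ∈ C → x = 0) ∧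
  (∀ C ∈ F, ∀ D ∈ F, C ∩ D ∈ F ∧ IsFace C (C ∩ D) ∧ IsFace D (C ∩ D))

section RDO

variable {V : Type*} [AddCommGroup V] [Module ℝ V]

theorem coneGen_zero (s : Finset V) : (0 : V) ∈ coneGen s :=
  ⟨fun _ => 0, fun _ => le_rfl, by simp⟩

theorem coneGen_add (s : Finset V) {x y : V} (hx : x ∈ coneGen s) (hy : y ∈ coneGen s) :
    x + y ∈ coneGen s := by
  obtain ⟨c, hc, rfl⟩ := hx
  obtain ⟨d, hd, rfl⟩ := hy
  exact ⟨fun v => c v + d v, fun v => add_nonneg (hc v) (hd v), by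
    simp [add_smul, Finset.sum_add_distrib]⟩

theorem coneGen_smul (s : Finset V) {x : V} (hx : x ∈ coneGen s) {r : ℝ} (hr : 0 ≤ r) :
    r • x ∈ coneGen s := by
  obtain ⟨c, hc, rfl⟩ := hx
  exact ⟨fun v => r * c v, fun v => mul_nonneg hr (hc v), by
    simp [mul_smul, Finset.smul_sum]⟩

theorem coneGen_unit (s : Finset V) : ∃ x0 ∈ coneGen s, ∀ x ∈ coneGen s,
    ∃ N : ℕ, (N : ℝ) • x0 - x ∈ coneGen s := by
  refine ⟨∑ v ∈ s, v, ⟨fun _ => 1, fun _ => zero_le_one, by simp⟩, ?_⟩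
  rintro x ⟨c, hc, rfl⟩
  obtain ⟨N, hN⟩ := exists_nat_ge (∑ v ∈ s, c v)
  classical
  refine ⟨N, fun v => if v ∈ s then N - c v else 0, fun v => ?_, ?_⟩
  · dsimp only
    split_ifs with h
    · have := Finset.single_le_sum (f := c) (fun i _ => hc i) h
      linarith
    · exact le_rfl
  · rw [Finset.smul_sum, ← Finset.sum_sub_distrib]
    refine Finset.sum_congr rfl fun v hv => ?_
    simp [hv, sub_smul]

theorem coneGen_closed {W : Type*} [NormedAddCommGroup W] [NormedSpace ℝ W] (s : Finset W)
    (hp : ∀ x ∈ coneGen s, -x ∈ coneGen s → x = 0) : IsClosed (coneGen s) := by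
  classical
  set s' := s.erase 0 with hs'
  set K := convexHull ℝ (s' : Set W) with hK
  have hKc : IsCompact K := Set.Finite.isCompact_convexHull ℝ s'.finite_toSet
  have hsum : ∀ c : W → ℝ, ∑ v ∈ s', c v • v = ∑ v ∈ s, c v • v := by
    intro c
    refine Finset.sum_subset (Finset.erase_subset _ _) fun v hv hv' => ?_
    have : v = 0 := by
      by_contra h
      exact hv' (Finset.mem_erase.2 ⟨h, hv⟩)
    simp [this]
  have hg : coneGen s' = coneGen s := by
    ext x
    simp only [coneGen, Set.mem_ofPred_eq, hsum]
  have hKσ : K ⊆ coneGen s := by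
    intro x hx
    rw [hK, Finset.mem_convexHull'] at hx
    obtain ⟨a, ha, -, rfl⟩ := hx
    rw [← hg]
    refine ⟨fun v => if v ∈ s' then a v else 0, fun v => ?_, ?_⟩
    · dsimp only
      split_ifs with h
      · exact ha v h
      · exact le_rfl
    · exact Finset.sum_congr rfl fun v hv => by simp [hv]
  have h0K : (0 : W) ∉ K := by
    intro h
    rw [hK, Finset.mem_convexHull'] at h
    obtain ⟨a, ha, ha1, ha0⟩ := h
    have : ∃ u ∈ s', 0 < a u := by
      by_contra hcon
      push Not at hcon
      have := Finset.sum_nonpos hcon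
      linarith
    obtain ⟨u, hu, hau⟩ := this
    have h1 : a u • u ∈ coneGen s := by
      rw [← hg]
      refine ⟨fun v => if v = u then a u else 0, fun v => ?_, ?_⟩
      · dsimp only
        split_ifs
        · exact hau.le
        · exact le_rfl
      · rw [Finset.sum_eq_single u]
        · simp
        · intro b _ hb
          simp [hb]
        · intro h
          exact absurd hu h
    have h2 : -(a u • u) ∈ coneGen s := by
      rw [← hg]
      refine ⟨fun v => if v ∈ s'.erase u then a v else 0, fun v => ?_, ?_⟩
      · dsimp only
        split_ifs with h
        · exact ha v (Finset.mem_of_mem_erase h)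
        · exact le_rfl
      · rw [← Finset.add_sum_erase _ _ hu] at ha0
        rw [← Finset.add_sum_erase _ _ hu, neg_eq_of_add_eq_zero_right ha0]
        simp only [Finset.notMem_erase, if_false, zero_smul, zero_add]
        exact Finset.sum_congr rfl fun v hv => by rw [if_pos hv]
    have h3 := hp _ h1 h2
    rcases smul_eq_zero.1 h3 with h | h
    · exact hau.ne' h
    · exact (Finset.mem_erase.1 hu).1 h
  obtain ⟨δ, hδ, hball⟩ := Metric.isOpen_iff.1 hKc.isClosed.isOpen_compl 0 h0K
  have hδK : ∀ k ∈ K, δ ≤ ‖k‖ := by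
    intro k hk
    by_contra hlt
    push Not at hlt
    exact hball (by simpa using hlt) hk
  refine isClosed_of_closure_subset fun x hx => ?_
  set R := (‖x‖ + 1) / δ
  set C : Set W := ((fun q : ℝ × W => q.1 • q.2) '' (Set.Icc 0 R ×ˢ K)) ∪ {0} with hC
  have hCc : IsCompact C :=
    ((isCompact_Icc.prod hKc).image (by fun_prop)).union isCompact_singleton
  have hCσ : C ⊆ coneGen s := by
    rintro y (⟨⟨r, k⟩, ⟨hr, hk⟩, rfl⟩ | hy)
    · exact coneGen_smul s (hKσ hk) hr.1
    · rw [Set.mem_singleton_iff.1 hy]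
      exact coneGen_zero s
  have hsub : coneGen s ∩ Metric.ball x 1 ⊆ C := by
    rintro y ⟨hy, hyb⟩
    rw [← hg] at hy
    obtain ⟨c, hc, rfl⟩ := hy
    set y := ∑ v ∈ s', c v • v with hyd
    rcases (Finset.sum_nonneg fun v (_ : v ∈ s') => hc v).eq_or_lt with h | h
    · right
      have : ∀ v ∈ s', c v = 0 := (Finset.sum_eq_zero_iff_of_nonneg fun v _ => hc v).1 h.symm
      rw [Set.mem_singleton_iff, hyd]
      exact Finset.sum_eq_zero fun v hv => by simp [this v hv]
    · left
      set S := ∑ v ∈ s', c v with hS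
      have hk : S⁻¹ • y ∈ K := by
        rw [hK, Finset.mem_convexHull']
        refine ⟨fun v => S⁻¹ * c v, fun v _ => mul_nonneg (inv_nonneg.2 h.le) (hc v), ?_, ?_⟩
        · rw [← Finset.mul_sum, ← hS, inv_mul_cancel₀ h.ne']
        · simp [mul_smul, ← Finset.smul_sum, hyd]
      have hyS : S • (S⁻¹ • y) = y := by rw [smul_smul, mul_inv_cancel₀ h.ne', one_smul]
      refine ⟨(S, S⁻¹ • y), ⟨⟨h.le, ?_⟩, hk⟩, hyS⟩
      have h1 := hδK _ hk
      have h2 : ‖y‖ = S * ‖S⁻¹ • y‖ := by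
        conv_lhs => rw [← hyS]
        rw [norm_smul, Real.norm_of_nonneg h.le]
      have h3 : ‖y‖ ≤ ‖x‖ + 1 := by
        have := norm_le_norm_add_norm_sub' y x
        rw [Metric.mem_ball, dist_eq_norm] at hyb
        linarith
      show S ≤ (‖x‖ + 1) / δ
      rw [le_div_iff₀ hδ]
      nlinarith
  have : x ∈ closure (coneGen s ∩ Metric.ball x 1) := by
    rw [mem_closure_iff] at hx ⊢
    intro o ho hxo
    obtain ⟨y, ⟨hy1, hy2⟩, hy3⟩ := hx (o ∩ Metric.ball x 1) (ho.inter Metric.isOpen_ball)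
      ⟨hxo, Metric.mem_ball_self one_pos⟩
    exact ⟨y, hy1, hy3, hy2⟩
  exact hCσ (closure_minimal hsub hCc.isClosed this)

end RDO

/-- if the strongly convex rational polyhedral cone `σ` of dimension `k+1`
maps under `p` onto the cone `τ` of dimension `k`, with faces of `σ` mapping onto faces
of `τ`, then `span(σ) ∩ ker p` is one-dimensional and `σ` has exactly one or exactly two
faces mapping isomorphically onto `τ`. -/
theorem relative_dimension_one_faces {n m k : ℕ}
    (p : (Fin n → ℝ) →ₗ[ℝ] (Fin m → ℝ))
    (σ : Set (Fin n → ℝ)) (τ : Set (Fin m → ℝ))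
    (hσ : IsRatPolyCone σ) (hτ : IsRatPolyCone τ)
    (hσsc : ∀ x ∈ σ, -x ∈ σ → x = 0) (hτsc : ∀ y ∈ τ, -y ∈ τ → y = 0)
    (himg : p '' σ = τ)
    (hdimσ : Module.finrank ℝ (Submodule.span ℝ σ) = k + 1)
    (hdimτ : Module.finrank ℝ (Submodule.span ℝ τ) = k)
    (hfaces : ∀ τ', IsFace σ τ' → ∃ lam, IsFace τ lam ∧ p '' τ' = lam) :
    Module.finrank ℝ ↥(Submodule.span ℝ σ ⊓ LinearMap.ker p) = 1 ∧
    ({τ' | IsFace σ τ' ∧ Set.InjOn p τ' ∧ p '' τ' = τ}.ncard = 1 ∨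
     {τ' | IsFace σ τ' ∧ Set.InjOn p τ' ∧ p '' τ' = τ}.ncard = 2) := by
  have hker : Module.finrank ℝ ↥(Submodule.span ℝ σ ⊓ LinearMap.ker p) = 1 := by
    have h1 := LinearMap.finrank_range_add_finrank_ker (p.domRestrict (Submodule.span ℝ σ))
    have h2 : LinearMap.range (p.domRestrict (Submodule.span ℝ σ)) = Submodule.span ℝ τ := by
      rw [LinearMap.range_domRestrict, Submodule.map_span, himg]
    have h3 : (LinearMap.ker (p.domRestrict (Submodule.span ℝ σ))).map
        (Submodule.span ℝ σ).subtype = Submodule.span ℝ σ ⊓ LinearMap.ker p := by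
      rw [LinearMap.ker_domRestrict, Submodule.map_comap_subtype]
    have h4 := Submodule.finrank_map_subtype_eq (Submodule.span ℝ σ)
      (LinearMap.ker (p.domRestrict (Submodule.span ℝ σ)))
    rw [h3] at h4
    rw [h2, hdimσ, hdimτ] at h1
    omega
  refine ⟨hker, ?_⟩
  obtain ⟨s, -, hs⟩ := hσ
  have h0 : (0 : Fin n → ℝ) ∈ σ := hs ▸ coneGen_zero s
  have hadd : ∀ {x y}, x ∈ σ → y ∈ σ → x + y ∈ σ := by
    intro x y hx hy
    rw [hs] at *
    exact coneGen_add s hx hy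
  have hsm : ∀ {x}, x ∈ σ → ∀ {r : ℝ}, 0 ≤ r → r • x ∈ σ := by
    intro x hx r hr
    rw [hs] at *
    exact coneGen_smul s hx hr
  obtain ⟨x0, hx0, hunit⟩ : ∃ x0 ∈ σ, ∀ x ∈ σ, ∃ N : ℕ, (N : ℝ) • x0 - x ∈ σ := by
    rw [hs]
    exact coneGen_unit s
  have hcl : IsClosed σ := by
    rw [hs] at hσsc ⊢
    exact coneGen_closed s hσsc
  have hpτ : ∀ {x}, x ∈ σ → p x ∈ τ := fun {x} hx => himg ▸ Set.mem_image_of_mem p hx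
  -- lifting of decompositions
  have hlift : ∀ v ∈ σ, ∀ a ∈ τ, ∀ b ∈ τ, a + b = p v → ∃ x ∈ σ, v - x ∈ σ ∧ p x = a := by
    intro v hv a ha b hb hab
    obtain ⟨lam, hlam, hl⟩ := hfaces {x | x ∈ σ ∧ v - x ∈ σ} ⟨fun x hx => hx.1, by
      rintro x hx y hy ⟨-, hxy⟩
      refine ⟨⟨hx, ?_⟩, hy, ?_⟩
      · have := hadd hxy hy
        rwa [show v - (x + y) + y = v - x by abel] at this
      · have := hadd hxy hx
        rwa [show v - (x + y) + x = v - y by abel] at this⟩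
    have hvl : a + b ∈ lam := by
      rw [hab, ← hl]
      exact ⟨v, ⟨hv, by simpa using h0⟩, rfl⟩
    have := (hlam.2 a ha b hb hvl).1
    rw [← hl] at this
    obtain ⟨x, ⟨h1, h2⟩, h3⟩ := this
    exact ⟨x, h1, h2, h3⟩
  -- direction
  obtain ⟨l, hl, hspan⟩ : ∃ l : Fin n → ℝ, -l ∉ σ ∧
      ∀ d ∈ Submodule.span ℝ σ, p d = 0 → ∃ r : ℝ, d = r • l := by
    obtain ⟨⟨l, hlm⟩, hl0, hl⟩ := finrank_eq_one_iff'.1 hker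
    have hl0' : l ≠ 0 := fun h => hl0 (Subtype.ext h)
    have hl' : ∀ d ∈ Submodule.span ℝ σ, p d = 0 → ∃ r : ℝ, d = r • l := by
      intro d hd hpd
      obtain ⟨r, hr⟩ := hl ⟨d, hd, hpd⟩
      exact ⟨r, (congrArg Subtype.val hr).symm⟩
    by_cases h : -l ∈ σ
    · refine ⟨-l, fun h' => hl0' ?_, fun d hd hpd => ?_⟩
      · exact hσsc l (by simpa using h') h
      · obtain ⟨r, hr⟩ := hl' d hd hpd
        exact ⟨-r, by simp [hr]⟩
    · exact ⟨l, h, hl'⟩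
  have hpl : ∀ x ∈ σ, ∀ y ∈ σ, p x = p y → ∃ r : ℝ, y - x = r • l := by
    intro x hx y hy hxy
    exact hspan _ (Submodule.sub_mem _ (Submodule.subset_span hy) (Submodule.subset_span hx))
      (by simp [hxy])
  -- existence of an extreme point
  obtain ⟨w, hw, hpw, hext⟩ : ∃ w ∈ σ, p w = p x0 ∧
      ∀ d, p d = 0 → w + d ∈ σ → w - d ∈ σ → d = 0 := by
    by_cases hlz : p l = 0
    swap
    · -- the line meets the kernel trivially
      refine ⟨x0, hx0, rfl, fun d hd h1 _ => ?_⟩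
      obtain ⟨r, hr⟩ := hpl x0 hx0 _ h1 (by simp [hd])
      have hr' : d = r • l := by simpa using hr
      rw [hr', map_smul, smul_eq_zero] at hd
      rcases hd with hd | hd
      · simp [hr', hd]
      · exact absurd hd hlz
    set T : Set ℝ := {t | x0 + t • l ∈ σ} with hT
    have hTc : IsClosed T := hcl.preimage (by fun_prop)
    have hT0 : (0 : ℝ) ∈ T := by simpa [hT] using hx0
    have hTb : BddBelow T := by
      by_contra hnb
      apply hl
      rw [not_bddBelow_iff] at hnb
      have hall : ∀ N : ℕ, (1 / ((N : ℝ) + 1)) • x0 + -l ∈ σ := by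
        intro N
        obtain ⟨t, ht, htN⟩ := hnb (-((N : ℝ) + 1))
        have hN : (0 : ℝ) < (N : ℝ) + 1 := by positivity
        have htn : 0 < -t := by linarith
        have h1 : (-t)⁻¹ • (x0 + t • l) ∈ σ := hsm ht (inv_nonneg.2 htn.le)
        have h2 : (1 / ((N : ℝ) + 1) - (-t)⁻¹) • x0 ∈ σ := by
          refine hsm hx0 (sub_nonneg.2 ?_)
          rw [inv_eq_one_div]
          exact one_div_le_one_div_of_le hN (by linarith)
        have h3 := hadd h2 h1
        convert h3 using 1
        have : (-t)⁻¹ * t = -1 := by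
          have : t ≠ 0 := by linarith
          field_simp
        rw [smul_add, smul_smul, this, sub_smul]
        simp
      have htend : Filter.Tendsto (fun N : ℕ => (1 / ((N : ℝ) + 1)) • x0 + -l) Filter.atTop
          (nhds ((0 : ℝ) • x0 + -l)) :=
        (tendsto_one_div_add_atTop_nhds_zero_nat.smul_const x0).add_const _
      have := hcl.mem_of_tendsto htend (Filter.Eventually.of_forall hall)
      simpa using this
    have hmem : sInf T ∈ T := hTc.csInf_mem ⟨0, hT0⟩ hTb
    refine ⟨x0 + sInf T • l, hmem, by simp [hlz], fun d hd h1 h2 => ?_⟩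
    obtain ⟨r, hr⟩ := hpl _ hmem _ h1 (by simp [hd])
    have hr' : d = r • l := by simpa using hr
    subst hr'
    have h1' : sInf T + r ∈ T := by
      simp only [hT, Set.mem_ofPred_eq, add_smul]
      rwa [← add_assoc]
    have h2' : sInf T - r ∈ T := by
      simp only [hT, Set.mem_ofPred_eq, sub_smul]
      rwa [← add_sub_assoc]
    have h3 := csInf_le hTb h1'
    have h4 := csInf_le hTb h2'
    have : r = 0 := by linarith
    simp [this]
  have hpunit : ∀ a ∈ τ, ∃ N : ℕ, 0 < N ∧ (N : ℝ) • p x0 - a ∈ τ := by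
    intro a ha
    rw [← himg] at ha
    obtain ⟨x, hx, rfl⟩ := ha
    obtain ⟨N, hN⟩ := hunit x hx
    refine ⟨N + 1, Nat.succ_pos _, ?_⟩
    have := hpτ (hadd hN hx0)
    convert this using 1
    simp [add_smul]
    abel
  set S := {τ' | IsFace σ τ' ∧ Set.InjOn p τ' ∧ p '' τ' = τ} with hS
  have hne : ∃ A, A ∈ S := by
    have hF : IsFace σ {x | x ∈ σ ∧ ∃ N : ℕ, 0 < N ∧ (N : ℝ) • w - x ∈ σ} := by
      refine ⟨fun x hx => hx.1, ?_⟩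
      rintro x hx y hy ⟨-, N, hN, hxy⟩
      refine ⟨⟨hx, N, hN, ?_⟩, hy, N, hN, ?_⟩
      · have := hadd hxy hy
        rwa [show (N : ℝ) • w - (x + y) + y = (N : ℝ) • w - x by abel] at this
      · have := hadd hxy hx
        rwa [show (N : ℝ) • w - (x + y) + x = (N : ℝ) • w - y by abel] at this
    refine ⟨_, hF, ?_, ?_⟩
    · rintro x ⟨hx, N, hN, hNx⟩ y ⟨hy, M, hM, hMy⟩ hxy
      have hNp : (0 : ℝ) < N := by exact_mod_cast hN
      have hMp : (0 : ℝ) < M := by exact_mod_cast hM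
      have hNM : (0 : ℝ) < N + M := by positivity
      have key : ∀ x y, x ∈ σ → (N : ℝ) • w + (M : ℝ) • w - y ∈ σ →
          w + ((N : ℝ) + M)⁻¹ • (x - y) ∈ σ := by
        intro x y hx hy
        have := hsm (hadd hx hy) (inv_nonneg.2 hNM.le)
        convert this using 1
        rw [show x + ((N : ℝ) • w + (M : ℝ) • w - y) = ((N : ℝ) + M) • w + (x - y) by
          rw [add_smul]; abel, smul_add, smul_smul, inv_mul_cancel₀ hNM.ne', one_smul]
      have hy' : (N : ℝ) • w + (M : ℝ) • w - y ∈ σ := by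
        rw [add_sub_assoc]
        exact hadd (hsm hw hNp.le) hMy
      have hx' : (N : ℝ) • w + (M : ℝ) • w - x ∈ σ := by
        rw [add_sub_right_comm]
        exact hadd hNx (hsm hw hMp.le)
      have h1 := key x y hx hy'
      have h2 := key y x hy hx'
      have h3 := hext _ (by simp [hxy]) h1 (by
        rw [sub_eq_add_neg, ← smul_neg, neg_sub]; exact h2)
      rcases smul_eq_zero.1 h3 with h | h
      · exact absurd h (inv_ne_zero hNM.ne')
      · exact sub_eq_zero.1 h
    · apply Set.Subset.antisymm
      · rintro _ ⟨x, hx, rfl⟩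
        exact hpτ hx.1
      · intro a ha
        obtain ⟨N, hN, hNa⟩ := hpunit a ha
        obtain ⟨x, hx, hx1, hx2⟩ := hlift ((N : ℝ) • w) (hsm hw (Nat.cast_nonneg N)) a ha _ hNa
          (by simp [hpw])
        exact ⟨x, ⟨hx, N, hN, hx1⟩, hx2⟩
  -- members are closed under addition
  have hSadd : ∀ A ∈ S, ∀ x ∈ A, ∀ y ∈ A, x + y ∈ A := by
    rintro A ⟨hA, hinj, hsur⟩ x hx y hy
    have h1 : p (x + y) ∈ p '' A := hsur ▸ hpτ (hadd (hA.1 hx) (hA.1 hy))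
    obtain ⟨v, hv, hvp⟩ := h1
    obtain ⟨x', hx', hvx', hpx'⟩ := hlift v (hA.1 hv) (p x) (hpτ (hA.1 hx)) (p y)
      (hpτ (hA.1 hy)) (by rw [hvp, map_add])
    have h2 := hA.2 x' hx' (v - x') hvx' (by simpa using hv)
    have h3 : x' = x := hinj h2.1 hx hpx'
    have h4 : v - x' = y := hinj h2.2 hy (by rw [map_sub, hvp, map_add, hpx']; abel)
    have : x + y = v := by rw [← h4, h3]; abel
    rwa [this]
  have hSnat : ∀ A ∈ S, ∀ x ∈ A, ∀ N : ℕ, (N : ℝ) • x ∈ A := by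
    intro A hA x hx N
    induction N with
    | zero =>
      have := hA.1.2 x (hA.1.1 hx) 0 h0 (by simpa using hx)
      simpa using this.2
    | succ N ih =>
      have := hSadd A hA _ ih _ hx
      simpa [add_smul] using this
  have hSsm : ∀ A ∈ S, ∀ x ∈ A, ∀ r : ℝ, 0 ≤ r → r • x ∈ A := by
    intro A hA x hx r hr
    obtain ⟨N, hN⟩ := exists_nat_ge r
    have h1 := hSnat A hA x hx N
    have hxσ := hA.1.1 hx
    exact (hA.1.2 (r • x) (hsm hxσ hr) (((N : ℝ) - r) • x) (hsm hxσ (sub_nonneg.2 hN))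
      (by rw [← add_smul]; simpa using h1)).1
  have hsubset : ∀ A ∈ S, ∀ B ∈ S, ∀ u, u ∈ A → u ∈ B → p u = p x0 → A ⊆ B := by
    intro A hA B hB u huA huB hu x hx
    obtain ⟨N, hN, hNa⟩ := hpunit (p x) (hpτ (hA.1.1 hx))
    have h1 := hSnat A hA u huA N
    have h2 := hSnat B hB u huB N
    obtain ⟨x', hx', hvx', hpx'⟩ := hlift ((N : ℝ) • u) (hA.1.1 h1) (p x) (hpτ (hA.1.1 hx)) _ hNa
      (by simp [hu])
    have h3 := hA.1.2 x' hx' _ hvx' (by simpa using h1)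
    have h4 := hB.1.2 x' hx' _ hvx' (by simpa using h2)
    have h5 : x' = x := hA.2.1 h3.1 hx hpx'
    exact h5 ▸ h4.1
  have hextS : ∀ D ∈ S, ∀ v ∈ D, ∀ a ∈ σ, ∀ b ∈ σ, ∀ e f : ℝ, 0 < e → 0 ≤ f → p a = p v →
      e • a + f • b = v → a = v := by
    intro D hD v hv a ha b hb e f he hf hpa hab
    have h1 := (hD.1.2 _ (hsm ha he.le) _ (hsm hb hf) (hab ▸ hv)).1
    have h2 := hSsm D hD _ h1 e⁻¹ (inv_nonneg.2 he.le)
    rw [smul_smul, inv_mul_cancel₀ he.ne', one_smul] at h2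
    exact hD.2.1 h2 hv hpa
  -- middle point
  have hmid : ∀ u, ∀ a b c : ℝ, a < b → b < c → ∀ D ∈ S, u + b • l ∈ D → u + a • l ∈ σ →
      u + c • l ∈ σ → p (u + a • l) = p (u + b • l) → u + a • l = u + b • l := by
    intro u a b c hab hbc D hD hb ha hc hp
    have hca : 0 < c - a := by linarith
    refine hextS D hD _ hb _ ha _ hc ((c - b) / (c - a)) ((b - a) / (c - a))
      (div_pos (by linarith) hca) (div_nonneg (by linarith) hca.le) hp ?_
    have e1 : (c - b) / (c - a) + (b - a) / (c - a) = 1 := by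
      field_simp
      ring
    have e2 : (c - b) / (c - a) * a + (b - a) / (c - a) * c = b := by
      field_simp
      ring
    calc _ = ((c - b) / (c - a) + (b - a) / (c - a)) • u +
          ((c - b) / (c - a) * a + (b - a) / (c - a) * c) • l := by module
      _ = _ := by rw [e1, e2, one_smul]
  have hpt : ∀ A ∈ S, ∃ r : ℝ, x0 + r • l ∈ A ∧ p (x0 + r • l) = p x0 := by
    intro A hA
    have : p x0 ∈ p '' A := hA.2.2 ▸ hpτ hx0
    obtain ⟨v, hv, hvp⟩ := this
    obtain ⟨r, hr⟩ := hpl x0 hx0 v (hA.1.1 hv) hvp.symm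
    have : x0 + r • l = v := by rw [← hr]; abel
    exact ⟨r, this ▸ hv, this ▸ hvp⟩
  have heq : ∀ A ∈ S, ∀ B ∈ S, ∀ u, u ∈ A → u ∈ B → p u = p x0 → A = B :=
    fun A hA B hB u h1 h2 h3 => Set.Subset.antisymm (hsubset A hA B hB u h1 h2 h3)
      (hsubset B hB A hA u h2 h1 h3)
  have hthree : ∀ A ∈ S, ∀ B ∈ S, ∀ C ∈ S, ∀ a b c : ℝ, a < b → b < c →
      x0 + a • l ∈ A → x0 + b • l ∈ B → x0 + c • l ∈ C → p (x0 + a • l) = p x0 →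
      p (x0 + b • l) = p x0 → A = B := by
    intro A hA B hB C hC a b c hab hbc ha hb hc hpa hpb
    have := hmid x0 a b c hab hbc B hB hb (hA.1.1 ha) (hC.1.1 hc) (hpa.trans hpb.symm)
    exact heq A hA B hB _ ha (this ▸ hb) hpa
  obtain ⟨A, hA⟩ := hne
  by_cases hone : ∀ B ∈ S, B = A
  · left
    rw [Set.ncard_eq_one]
    exact ⟨A, Set.eq_singleton_iff_unique_mem.2 ⟨hA, hone⟩⟩
  · right
    push Not at hone
    obtain ⟨B, hB, hBA⟩ := hone
    rw [Set.ncard_eq_two]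
    refine ⟨A, B, hBA.symm, Set.Subset.antisymm ?_ ?_⟩
    · intro C hC
      by_contra hcon
      rw [Set.mem_insert_iff, Set.mem_singleton_iff, not_or] at hcon
      obtain ⟨hCA, hCB⟩ := hcon
      obtain ⟨a, ha, hpa⟩ := hpt A hA
      obtain ⟨b, hb, hpb⟩ := hpt B hB
      obtain ⟨c, hc, hpc⟩ := hpt C hC
      have hab : a ≠ b := by
        rintro rfl
        exact hBA.symm (heq A hA B hB _ ha hb hpa)
      have hac : a ≠ c := by
        rintro rfl
        exact (Ne.symm hCA) (heq A hA C hC _ ha hc hpa)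
      have hbc : b ≠ c := by
        rintro rfl
        exact (Ne.symm hCB) (heq B hB C hC _ hb hc hpb)
      rcases lt_or_gt_of_ne hab with h1 | h1 <;> rcases lt_or_gt_of_ne hac with h2 | h2 <;>
        rcases lt_or_gt_of_ne hbc with h3 | h3
      · exact hBA.symm (hthree A hA B hB C hC a b c h1 h3 ha hb hc hpa hpb)
      · exact (Ne.symm hCA) (hthree A hA C hC B hB a c b h2 h3 ha hc hb hpa hpc)
      · linarith
      · exact hCA (hthree C hC A hA B hB c a b h2 h1 hc ha hb hpc hpa)
      · exact hBA (hthree B hB A hA C hC b a c h1 h2 hb ha hc hpb hpa)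
      · linarith
      · exact (Ne.symm hCB) (hthree B hB C hC A hA b c a h3 h2 hb hc ha hpb hpc)
      · exact hCB (hthree C hC B hB A hA c b a h3 h1 hc hb ha hpc hpb)
    · rintro C (rfl | hC)
      · exact hA
      · rw [Set.mem_singleton_iff.1 hC]
        exact hB
end

section
/- For ψ varying so that ψ + L stays in the relative interiors of all cones τ₀, …, τ_n ∈ N₀(τ), the set N(ψ) = {σ ∈ F : σ° ∩ (ψ + L) ≠ ∅} is constant; consequently the common image p(v₀) = ⋯ = p(v_n) of compatible lifts lies in the interior of τ. -/
open Set

/-- `N(ψ) = {σ ∈ F : σ° ∩ (ψ + L) ≠ ∅}`. -/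
def KSZset {n : ℕ} (F : Set (Set (Fin n → ℝ))) (L : Submodule ℝ (Fin n → ℝ))
    (ψ : Fin n → ℝ) : Set (Set (Fin n → ℝ)) :=
  {σ ∈ F | (intrinsicInterior ℝ σ ∩ {x | ∃ l ∈ L, x = ψ + l}).Nonempty}


theorem kz_coneGen_closed {k : ℕ} (s : Finset (Fin k → ℝ)) : IsClosed (coneGen s) := by
  classical
  induction h : s.card using Nat.strong_induction_on generalizing s with
  | _ N ih =>
  by_cases hli : LinearIndependent ℝ (fun v : s => (v : Fin k → ℝ))
  · let f : (s → ℝ) →ₗ[ℝ] (Fin k → ℝ) := Fintype.linearCombination ℝ (fun v : s => (v : Fin k → ℝ))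
    have hf : LinearMap.ker f = ⊥ := by
      rw [LinearMap.ker_eq_bot]
      exact hli.fintypeLinearCombination_injective
    have hcl := (LinearMap.isClosedEmbedding_of_injective hf).isClosedMap
    have : coneGen s = f '' (Set.Ici 0) := by
      ext x
      constructor
      · rintro ⟨c, hc, rfl⟩
        refine ⟨fun v => c v, fun v => hc v, ?_⟩
        simp only [f, Fintype.linearCombination_apply]
        exact Finset.sum_coe_sort s (fun v => c v • v)
      · rintro ⟨c, hc, rfl⟩
        refine ⟨fun v => if hv : v ∈ s then c ⟨v, hv⟩ else 0, fun v => ?_, ?_⟩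
        · dsimp only
          split_ifs with hv
          · exact hc _
          · exact le_rfl
        · simp only [f, Fintype.linearCombination_apply]
          rw [← Finset.sum_coe_sort s]
          exact Finset.sum_congr rfl fun v _ => by simp
    rw [this]
    exact hcl _ isClosed_Ici
  · have hrel : ∃ g : (Fin k → ℝ) → ℝ, ∑ v ∈ s, g v • v = 0 ∧ ∃ v ∈ s, 0 < g v := by
      rw [Fintype.not_linearIndependent_iff] at hli
      obtain ⟨g, hg, ⟨i, hi⟩, hne⟩ := hli
      have key : ∀ g : s → ℝ, ∑ v, g v • (v : Fin k → ℝ) = 0 → 0 < g ⟨i, hi⟩ →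
          ∃ g : (Fin k → ℝ) → ℝ, ∑ v ∈ s, g v • v = 0 ∧ ∃ v ∈ s, 0 < g v := by
        intro g hg hpos
        refine ⟨fun v => if hv : v ∈ s then g ⟨v, hv⟩ else 0, ?_, i, hi, by simpa [hi] using hpos⟩
        rw [← hg, ← Finset.sum_coe_sort s]
        exact Finset.sum_congr rfl fun v _ => by simp
      rcases lt_or_gt_of_ne hne with h1 | h1
      · refine key (fun v => - g v) ?_ (by simpa using h1)
        simp only [neg_smul, Finset.sum_neg_distrib, hg, neg_zero]
      · exact key g hg h1
    obtain ⟨g, hg, v0, hv0, hgv0⟩ := hrel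
    have : coneGen s = ⋃ v ∈ s, coneGen (s.erase v) := by
      ext x
      simp only [Set.mem_iUnion]
      constructor
      · rintro ⟨c, hc, rfl⟩
        obtain ⟨w, hw, hmin⟩ := Finset.exists_min_image (s.filter fun v => 0 < g v)
          (fun v => c v / g v) ⟨v0, by simp [hv0, hgv0]⟩
        simp only [Finset.mem_filter] at hw hmin
        set r := c w / g w with hr
        have hr0 : 0 ≤ r := div_nonneg (hc w) hw.2.le
        have hnn : ∀ v ∈ s, 0 ≤ c v - r * g v := by
          intro v hv
          by_cases hgv : 0 < g v
          · have := hmin v ⟨hv, hgv⟩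
            rw [le_div_iff₀ hgv] at this
            linarith
          · have : r * g v ≤ 0 := mul_nonpos_of_nonneg_of_nonpos hr0 (not_lt.1 hgv)
            linarith [hc v]
        refine ⟨w, hw.1, fun v => if v ∈ s then c v - r * g v else 0, fun v => ?_, ?_⟩
        · dsimp only
          split_ifs with hv
          · exact hnn v hv
          · exact le_rfl
        · have hw0 : c w - r * g w = 0 := by
            rw [hr, div_mul_cancel₀ _ hw.2.ne']; ring
          have e1 : ∑ v ∈ s, c v • v = ∑ v ∈ s, (c v - r * g v) • v := by
            simp only [sub_smul, Finset.sum_sub_distrib, mul_smul, ← Finset.smul_sum, hg]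
            simp
          rw [e1, ← Finset.add_sum_erase s _ hw.1, hw0, zero_smul, zero_add]
          exact Finset.sum_congr rfl fun v hv => by simp [Finset.mem_of_mem_erase hv]
      · rintro ⟨w, hw, c, hc, rfl⟩
        refine ⟨fun v => if v = w then 0 else c v, fun v => ?_, ?_⟩
        · dsimp only
          split_ifs
          · exact le_rfl
          · exact hc v
        · rw [← Finset.add_sum_erase s _ hw]
          simp only [if_true, zero_smul, zero_add]
          exact Finset.sum_congr rfl fun v hv => by simp [Finset.ne_of_mem_erase hv]
    rw [this]
    refine s.finite_toSet.isClosed_biUnion fun v hv => ?_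
    exact ih _ (by rw [← h]; exact Finset.card_erase_lt_of_mem hv) _ rfl

theorem kz_coneGen_image_closed {n m : ℕ} (p : (Fin n → ℝ) →ₗ[ℝ] (Fin m → ℝ))
    (s : Finset (Fin n → ℝ)) : IsClosed (p '' coneGen s) := by
  classical
  have : p '' coneGen s = coneGen (s.image p) := by
    ext y
    constructor
    · rintro ⟨_, ⟨c, hc, rfl⟩, rfl⟩
      refine ⟨fun w => ∑ v ∈ s with p v = w, c v, fun w => Finset.sum_nonneg fun v _ => hc v, ?_⟩
      rw [map_sum, ← Finset.sum_fiberwise_of_maps_to (t := s.image p) (g := p)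
        (fun v hv => Finset.mem_image_of_mem p hv)]
      refine Finset.sum_congr rfl fun w _ => ?_
      rw [Finset.sum_smul]
      refine Finset.sum_congr rfl fun v hv => ?_
      rw [map_smul, (Finset.mem_filter.1 hv).2]
    · rintro ⟨c, hc, rfl⟩
      have hinv : ∀ w ∈ s.image p, ∃ v ∈ s, p v = w := fun w hw => by simpa using hw
      choose! q hq hpq using hinv
      refine ⟨∑ w ∈ s.image p, c w • q w, ?_, ?_⟩
      · refine ⟨fun v => ∑ w ∈ s.image p with q w = v, c w,
          fun w => Finset.sum_nonneg fun v _ => hc v, ?_⟩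
        rw [← Finset.sum_fiberwise_of_maps_to (t := s) (g := q) hq]
        refine Finset.sum_congr rfl fun w _ => ?_
        rw [Finset.sum_smul]
        refine Finset.sum_congr rfl fun v hv => ?_
        rw [(Finset.mem_filter.1 hv).2]
      · rw [map_sum]
        exact Finset.sum_congr rfl fun w hw => by rw [map_smul, hpq w hw]
  rw [this]
  exact kz_coneGen_closed _

theorem kz_mem_ii {k : ℕ} {C : Set (Fin k → ℝ)} {x : Fin k → ℝ} :
    x ∈ intrinsicInterior ℝ C ↔ x ∈ C ∧ ∃ r > 0, ∀ z ∈ affineSpan ℝ C, dist z x < r → z ∈ C := by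
  rw [mem_intrinsicInterior]
  constructor
  · rintro ⟨y, hy, rfl⟩
    refine ⟨interior_subset (s := ((↑) ⁻¹' C : Set (affineSpan ℝ C))) hy, ?_⟩
    rw [mem_interior_iff_mem_nhds, Metric.mem_nhds_iff] at hy
    obtain ⟨r, hr, hb⟩ := hy
    exact ⟨r, hr, fun z hz hd => hb (show (⟨z, hz⟩ : affineSpan ℝ C) ∈ Metric.ball y r from hd)⟩
  · rintro ⟨hx, r, hr, hb⟩
    refine ⟨⟨x, subset_affineSpan ℝ C hx⟩, ?_, rfl⟩
    rw [mem_interior_iff_mem_nhds, Metric.mem_nhds_iff]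
    exact ⟨r, hr, fun z hz => hb z z.2 hz⟩

theorem kz_ii_iff {k : ℕ} {C : Set (Fin k → ℝ)} (hC : Convex ℝ C) {x : Fin k → ℝ} :
    x ∈ intrinsicInterior ℝ C ↔ x ∈ C ∧ ∀ y ∈ C, ∃ ε > (0:ℝ), x + ε • (x - y) ∈ C := by
  constructor
  · intro h
    obtain ⟨hx, r, hr, hb⟩ := kz_mem_ii.1 h
    refine ⟨hx, fun y hy => ?_⟩
    have hxs := subset_affineSpan ℝ C hx
    have hys := subset_affineSpan ℝ C hy
    have hpos : 0 < ‖x - y‖ + 1 := by positivity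
    refine ⟨r / (‖x - y‖ + 1) , by positivity, hb _ ?_ ?_⟩
    · have := AffineSubspace.smul_vsub_vadd_mem (affineSpan ℝ C) (r / (‖x - y‖ + 1)) hxs hys hxs
      simpa [add_comm] using this
    · rw [dist_eq_norm, add_sub_cancel_left, norm_smul, Real.norm_of_nonneg (by positivity),
        div_mul_eq_mul_div, div_lt_iff₀ hpos]
      nlinarith
  · rintro ⟨hx, h⟩
    obtain ⟨y, hy⟩ := Set.Nonempty.intrinsicInterior hC ⟨x, hx⟩
    obtain ⟨hyC, r, hr, hb⟩ := kz_mem_ii.1 hy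
    obtain ⟨ε, hε, hx'⟩ := h y hyC
    refine kz_mem_ii.2 ⟨hx, r * (ε / (1 + ε)), by positivity, fun z hz hd => ?_⟩
    have hys := subset_affineSpan ℝ C hyC
    have hxs := subset_affineSpan ℝ C hx
    have h1 : y + ((1 + ε) / ε) • (z - x) ∈ C := by
      refine hb _ ?_ ?_
      · have := AffineSubspace.smul_vsub_vadd_mem (affineSpan ℝ C) ((1 + ε) / ε) hz hxs hys
        simpa [add_comm] using this
      · rw [dist_eq_norm, add_sub_cancel_left, norm_smul, Real.norm_of_nonneg (by positivity)]
        rw [dist_eq_norm] at hd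
        calc (1 + ε) / ε * ‖z - x‖ < (1 + ε) / ε * (r * (ε / (1 + ε))) := by gcongr
          _ = r := by field_simp
    have h2 := hC hx' h1 (a := 1 / (1 + ε)) (b := ε / (1 + ε)) (by positivity) (by positivity)
      (by field_simp)
    convert h2 using 1
    ext i
    simp only [Pi.add_apply, Pi.smul_apply, Pi.sub_apply, smul_eq_mul]
    field_simp
    ring

def kzRi {k : ℕ} (C : Set (Fin k → ℝ)) : Set (Fin k → ℝ) :=
  {x | x ∈ C ∧ ∀ y ∈ C, ∃ ε > (0:ℝ), x - ε • y ∈ C}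

section cone
variable {k : ℕ} {C : Set (Fin k → ℝ)}

theorem kz_add (hC : IsPolyCone C) {x y : Fin k → ℝ} (hx : x ∈ C) (hy : y ∈ C) : x + y ∈ C := by
  obtain ⟨s, rfl⟩ := hC
  obtain ⟨c, hc, rfl⟩ := hx
  obtain ⟨d, hd, rfl⟩ := hy
  exact ⟨fun v => c v + d v, fun v => add_nonneg (hc v) (hd v), by
    simp only [add_smul, Finset.sum_add_distrib]⟩

theorem kz_smul (hC : IsPolyCone C) {x : Fin k → ℝ} (hx : x ∈ C) {r : ℝ} (hr : 0 ≤ r) :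
    r • x ∈ C := by
  obtain ⟨s, rfl⟩ := hC
  obtain ⟨c, hc, rfl⟩ := hx
  exact ⟨fun v => r * c v, fun v => mul_nonneg hr (hc v), by
    simp only [mul_smul, Finset.smul_sum]⟩

theorem kz_closed (hC : IsPolyCone C) : IsClosed C := by
  obtain ⟨s, rfl⟩ := hC
  exact kz_coneGen_closed s

theorem kz_convex (hC : IsPolyCone C) : Convex ℝ C :=
  fun _ hx _ hy _ _ ha hb _ => kz_add hC (kz_smul hC hx ha) (kz_smul hC hy hb)

theorem kz_shrink (hC : IsPolyCone C) {x y : Fin k → ℝ} (hy : y ∈ C) {e d : ℝ}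
    (h : x - e • y ∈ C) (hd : d ≤ e) : x - d • y ∈ C := by
  have := kz_add hC h (kz_smul hC hy (sub_nonneg.2 hd))
  convert this using 1
  module

theorem kz_ri_smul (hC : IsPolyCone C) {x : Fin k → ℝ} (hx : x ∈ kzRi C) {r : ℝ} (hr : 0 < r) :
    r • x ∈ kzRi C := by
  refine ⟨kz_smul hC hx.1 hr.le, fun y hy => ?_⟩
  obtain ⟨e, he, h⟩ := hx.2 y hy
  refine ⟨r * e, by positivity, ?_⟩
  have := kz_smul hC h hr.le
  convert this using 1
  module

theorem kz_ri_add (hC : IsPolyCone C) {x z : Fin k → ℝ} (hx : x ∈ kzRi C) (hz : z ∈ C) :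
    x + z ∈ kzRi C := by
  refine ⟨kz_add hC hx.1 hz, fun y hy => ?_⟩
  obtain ⟨e, he, h⟩ := hx.2 y hy
  refine ⟨e, he, ?_⟩
  have := kz_add hC h hz
  convert this using 1
  module

theorem kz_ri_eq (hC : IsPolyCone C) : intrinsicInterior ℝ C = kzRi C := by
  ext x
  rw [kz_ii_iff (kz_convex hC)]
  refine and_congr_right fun hx => forall₂_congr fun y hy => ?_
  constructor
  · rintro ⟨e, he, h⟩
    refine ⟨e / (1 + e), by positivity, ?_⟩
    have := kz_smul hC h (r := 1 / (1 + e)) (by positivity)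
    convert this using 1
    ext i
    simp only [Pi.add_apply, Pi.smul_apply, Pi.sub_apply, smul_eq_mul]
    field_simp
    ring
  · rintro ⟨e, he, h⟩
    refine ⟨e, he, ?_⟩
    have := kz_add hC h (kz_smul hC hx he.le)
    convert this using 1
    module

end cone

section fan
variable {n : ℕ} {F : Set (Set (Fin n → ℝ))}

theorem kz_ri_sub (hF : IsFan F) {C D : Set (Fin n → ℝ)} (hC : C ∈ F) (hD : D ∈ F)
    {x : Fin n → ℝ} (hx : x ∈ kzRi C) (hxD : x ∈ D) : C ⊆ D := by
  intro y hy
  obtain ⟨e, he, h⟩ := hx.2 y hy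
  have hface := (hF.2.2 C hC D hD).2.1
  have := (hface.2 _ h _ (kz_smul (hF.1 C hC) hy he.le) (by simpa using ⟨hx.1, hxD⟩)).2
  have h2 := kz_smul (hF.1 D hD) this.2 (r := e⁻¹) (by positivity)
  rwa [smul_smul, inv_mul_cancel₀ he.ne', one_smul] at h2

theorem kz_nhds (hF : IsFan F) (hfin : F.Finite) (x : Fin n → ℝ) :
    ∀ᶠ z in nhds x, ∀ D ∈ F, z ∈ D → x ∈ D := by
  rw [Filter.eventually_all_finite hfin]
  intro D hD
  by_cases hx : x ∈ D
  · exact Filter.Eventually.of_forall fun _ _ => hx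
  · filter_upwards [(kz_closed (hF.1 D hD)).isOpen_compl.mem_nhds hx] with z hz h
    exact absurd h hz

theorem kz_cell (hF : IsFan F) (hfin : F.Finite) (hcomplete : ⋃₀ F = Set.univ)
    (x : Fin n → ℝ) : ∃ C ∈ F, x ∈ kzRi C := by
  have hne : {C | C ∈ F ∧ x ∈ C}.Nonempty := by
    have : x ∈ ⋃₀ F := by rw [hcomplete]; trivial
    obtain ⟨C, hC, hx⟩ := this
    exact ⟨C, hC, hx⟩
  obtain ⟨C, hmin⟩ := (hfin.subset (t := {C | C ∈ F ∧ x ∈ C}) fun C hC => hC.1).exists_minimal hne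
  obtain ⟨hC, hxC⟩ := hmin.prop
  have hsub : ∀ D ∈ F, x ∈ D → C ⊆ D := by
    intro D hD hxD
    have := hmin.le_of_le (y := C ∩ D) ⟨(hF.2.2 C hC D hD).1, hxC, hxD⟩ Set.inter_subset_left
    exact fun z hz => (this hz).2
  refine ⟨C, hC, hxC, fun y hy => ?_⟩
  have hcont : Filter.Tendsto (fun e : ℝ => x - e • y) (nhdsWithin 0 (Set.Ioi 0)) (nhds x) := by
    have : Continuous (fun e : ℝ => x - e • y) := by fun_prop
    have := this.tendsto 0
    simp only [zero_smul, sub_zero] at this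
    exact this.mono_left nhdsWithin_le_nhds
  have hev := (hcont.eventually (kz_nhds hF hfin x)).and self_mem_nhdsWithin
  obtain ⟨e, he, he0⟩ := hev.exists
  have he0 : 0 < e := he0
  have : x - e • y ∈ ⋃₀ F := by rw [hcomplete]; trivial
  obtain ⟨D, hD, hz⟩ := this
  have hCD := hsub D hD (he D hD hz)
  refine ⟨e, he0, ?_⟩
  exact ((hF.2.2 C hC D hD).2.2.2 _ hz _ (kz_smul (hF.1 D hD) (hCD hy) he0.le)
    (by simpa using ⟨hxC, hCD hxC⟩)).1.1

theorem kz_mem (hF : IsFan F) {L : Submodule ℝ (Fin n → ℝ)} {ψ : Fin n → ℝ}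
    {σ : Set (Fin n → ℝ)} :
    σ ∈ KSZset F L ψ ↔ σ ∈ F ∧ ∃ x ∈ kzRi σ, x - ψ ∈ L := by
  simp only [KSZset, Set.mem_sep_iff]
  refine and_congr_right fun h => ?_
  rw [kz_ri_eq (hF.1 σ h)]
  constructor
  · rintro ⟨x, hx, l, hl, rfl⟩
    exact ⟨_, hx, by simpa using hl⟩
  · rintro ⟨x, hx, hl⟩
    exact ⟨x, hx, _, hl, by simp⟩

theorem kz_inv (hF : IsFan F) {L : Submodule ℝ (Fin n → ℝ)} {ψ φ : Fin n → ℝ} (h : ψ - φ ∈ L) :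
    KSZset F L ψ = KSZset F L φ := by
  ext σ
  rw [kz_mem hF, kz_mem hF]
  refine and_congr_right fun _ => exists_congr fun x => and_congr_right fun _ => ?_
  rw [← L.add_mem_iff_left h (x := x - ψ)]
  simp

theorem kz_pigeon {ι : Set (Set (Fin n → ℝ))} (hι : ι.Finite) {S : Set (Fin n → ℝ)}
    {x : Fin n → ℝ} (hx : x ∈ closure S) (hS : ∀ z ∈ S, ∃ ρ ∈ ι, z ∈ kzRi ρ) :
    ∃ ρ ∈ ι, x ∈ closure (S ∩ kzRi ρ) := by
  have : S ⊆ ⋃ ρ ∈ ι, S ∩ kzRi ρ := by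
    intro z hz
    obtain ⟨ρ, hρ, h⟩ := hS z hz
    simp only [Set.mem_iUnion]
    exact ⟨ρ, hρ, hz, h⟩
  have := closure_mono this hx
  rw [hι.closure_biUnion] at this
  simpa only [Set.mem_iUnion, exists_prop] using this

theorem kz_cross {C : Set (Fin n → ℝ)} (hC : IsClosed C) {a d : Fin n → ℝ} {δ : ℝ} (hδ : 0 < δ)
    (ha : a ∈ C) (hb : a - δ • d ∉ C) :
    ∃ s, 0 ≤ s ∧ s < δ ∧ a - s • d ∈ C ∧ ∀ t, s < t → t ≤ δ → a - t • d ∉ C := by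
  have hcont : Continuous (fun e : ℝ => a - e • d) := by fun_prop
  have hcpt : IsCompact (Set.Icc 0 δ ∩ (fun e : ℝ => a - e • d) ⁻¹' C) :=
    isCompact_Icc.inter_right (hC.preimage hcont)
  obtain ⟨s, ⟨hs, hsC⟩, hmax⟩ := hcpt.exists_isGreatest
    ⟨0, ⟨le_rfl, hδ.le⟩, by simpa using ha⟩
  refine ⟨s, hs.1, lt_of_le_of_ne hs.2 ?_, hsC, ?_⟩
  · rintro rfl
    exact hb hsC
  · intro t hst ht h
    exact absurd (hmax ⟨⟨hs.1.trans hst.le, ht⟩, h⟩) (not_le.2 hst)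

theorem kz_closed_step (hF : IsFan F) (hfin : F.Finite) (hcomplete : ⋃₀ F = Set.univ)
    (L : Submodule ℝ (Fin n → ℝ)) (T : Set (Set (Fin n → ℝ))) {x : Fin n → ℝ}
    (hx : x ∈ closure {z | KSZset F L z = T}) (hT : T ⊆ KSZset F L x)
    {σ : Set (Fin n → ℝ)} (hσ : σ ∈ F) (hxσ : x ∈ kzRi σ) : σ ∈ T := by
  by_contra hσT
  set E := {z | KSZset F L z = T} with hE
  obtain ⟨ρ, hmin⟩ := (hfin.subset (t := {ρ | ρ ∈ F ∧ x ∈ closure (E ∩ kzRi ρ)})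
    fun C hC => hC.1).exists_minimal (by
      obtain ⟨ρ, h1, h2⟩ := kz_pigeon hfin hx fun z _ => kz_cell hF hfin hcomplete z
      exact ⟨ρ, h1, h2⟩)
  obtain ⟨hρ, hxρ⟩ := hmin.prop
  have hP := hF.1 ρ hρ
  have hcl := kz_closed hP
  have hxρ' : x ∈ ρ := by
    rw [← hcl.closure_eq]
    exact closure_mono (fun z hz => hz.2.1) hxρ
  have hρT : ρ ∈ T := by
    obtain ⟨z, hzE, hz⟩ := closure_nonempty_iff.1 ⟨x, hxρ⟩
    have hzE : KSZset F L z = T := hzE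
    rw [← hzE, kz_mem hF]
    exact ⟨hρ, z, hz, by simp⟩
  have hnri : x ∉ kzRi ρ := by
    intro h
    have : ρ = σ := (kz_ri_sub hF hρ hσ h hxσ.1).antisymm (kz_ri_sub hF hσ hρ hxσ hxρ')
    exact hσT (this ▸ hρT)
  obtain ⟨-, w, hw, hwL⟩ := (kz_mem hF).1 (hT hρT)
  have hout : ∀ δ : ℝ, 0 < δ → x - δ • (w - x) ∉ ρ := by
    intro δ hδ h
    apply hnri
    have h1 := kz_ri_smul hP (kz_ri_add hP (kz_ri_smul hP hw hδ) h) (r := (1 + δ)⁻¹)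
      (by positivity)
    convert h1 using 1
    rw [show δ • w + (x - δ • (w - x)) = (1 + δ) • x by module, smul_smul,
      inv_mul_cancel₀ (by positivity), one_smul]
  have hS : x ∈ closure {z | z ∈ E ∧ z ∈ ρ ∧ z ∉ kzRi ρ} := by
    rw [Metric.mem_closure_iff]
    intro η hη
    set δ := η / 2 / (‖w - x‖ + 1) with hδd
    have hpos : 0 < ‖w - x‖ + 1 := by positivity
    have hδ : 0 < δ := by positivity
    have hcont : Continuous (fun z : Fin n → ℝ => z - δ • (w - x)) := by fun_prop
    have hev : ∀ᶠ z in nhds x, z - δ • (w - x) ∉ ρ ∧ dist z x < η / 2 :=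
      Filter.Eventually.and ((hcl.isOpen_compl.preimage hcont).mem_nhds (hout δ hδ))
        (Metric.ball_mem_nhds x (half_pos hη))
    obtain ⟨a, ⟨haE, haρ⟩, ha1, ha2⟩ := ((mem_closure_iff_frequently.1 hxρ).and_eventually hev).exists
    obtain ⟨s, hs0, hsδ, hsC, hsmax⟩ := kz_cross hcl hδ haρ.1 ha1
    refine ⟨a - s • (w - x), ⟨?_, hsC, ?_⟩, ?_⟩
    · have haE : KSZset F L a = T := haE
      show KSZset F L _ = T
      rw [← haE]
      apply kz_inv hF
      rw [sub_sub_cancel_left]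
      exact L.neg_mem (L.smul_mem _ hwL)
    · intro h
      obtain ⟨e, he, h1⟩ := h.2 w hw.1
      have hm : 0 < min e (δ - s) := lt_min he (sub_pos.2 hsδ)
      have h2 := kz_add hP (kz_shrink hP hw.1 h1 (min_le_left e (δ - s)))
        (kz_smul hP hxρ' hm.le)
      refine hsmax (s + min e (δ - s)) (by linarith) (by linarith [min_le_right e (δ - s)]) ?_
      convert h2 using 1
      module
    · rw [dist_comm]
      calc dist (a - s • (w - x)) x ≤ dist (a - s • (w - x)) a + dist a x := dist_triangle _ _ _
        _ < η / 2 + η / 2 := by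
          refine add_lt_add_of_le_of_lt ?_ ha2
          rw [dist_eq_norm, sub_sub_cancel_left, norm_neg, norm_smul, Real.norm_of_nonneg hs0]
          calc s * ‖w - x‖ ≤ δ * (‖w - x‖ + 1) := by gcongr; linarith
            _ = η / 2 := by rw [hδd]; field_simp
        _ = η := by ring
  obtain ⟨ρ', hρ', hx'⟩ := kz_pigeon hfin hS fun z _ => kz_cell hF hfin hcomplete z
  obtain ⟨z, ⟨-, hzρ, hznri⟩, hz⟩ := closure_nonempty_iff.1 ⟨x, hx'⟩
  have hsub := kz_ri_sub hF hρ' hρ hz hzρ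
  have hmono : closure ({z | z ∈ E ∧ z ∈ ρ ∧ z ∉ kzRi ρ} ∩ kzRi ρ') ⊆ closure (E ∩ kzRi ρ') :=
    closure_mono fun z hz => ⟨hz.1.1, hz.2⟩
  have hsup := hmin.le_of_le (y := ρ') ⟨hρ', hmono hx'⟩ hsub
  have : ρ' = ρ := hsub.antisymm hsup
  exact hznri (this ▸ hz)

theorem kz_closed_step' (hF : IsFan F) (hfin : F.Finite) (hcomplete : ⋃₀ F = Set.univ)
    (L : Submodule ℝ (Fin n → ℝ)) (T : Set (Set (Fin n → ℝ))) {x : Fin n → ℝ}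
    (hx : x ∈ closure {z | KSZset F L z = T}) (hT : T ⊆ KSZset F L x) : KSZset F L x = T := by
  refine Set.Subset.antisymm (fun σ hσ => ?_) hT
  obtain ⟨hσF, y, hy, hyL⟩ := (kz_mem hF).1 hσ
  refine kz_closed_step hF hfin hcomplete L T (x := y) ?_ ?_ hσF hy
  · have hc : Continuous (fun z : Fin n → ℝ => z + (y - x)) := by fun_prop
    have := map_mem_closure (t := {z | KSZset F L z = T}) hc hx (fun z hz => ?_)
    · simpa using this
    · have hz : KSZset F L z = T := hz
      show KSZset F L _ = T
      rw [← hz]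
      exact kz_inv hF (by simpa using hyL)
  · rwa [kz_inv hF hyL]

/-- openness in the star -/
theorem kz_star (hF : IsFan F) {L : Submodule ℝ (Fin n → ℝ)} {ψ φ : Fin n → ℝ}
    {ρ σ : Set (Fin n → ℝ)} (hρσ : ρ ⊆ σ) (h1 : ρ ∈ KSZset F L ψ) (h2 : ρ ∈ KSZset F L φ)
    (h3 : σ ∈ KSZset F L φ) : σ ∈ KSZset F L ψ := by
  rw [kz_mem hF] at *
  obtain ⟨hρ, y0, hy0, hy0L⟩ := h1
  obtain ⟨-, y, hy, hyL⟩ := h2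
  obtain ⟨hσ, x, hx, hxL⟩ := h3
  obtain ⟨e, he, h⟩ := hy0.2 y hy.1
  have hP := hF.1 σ hσ
  refine ⟨hσ, _, kz_ri_add hP (kz_ri_smul hP hx he) (hρσ h), ?_⟩
  have := L.add_mem hy0L (L.smul_mem e (L.sub_mem hxL hyL))
  convert this using 1
  module

theorem kz_conv (hF : IsFan F) (L : Submodule ℝ (Fin n → ℝ)) (T : Set (Set (Fin n → ℝ))) :
    Convex ℝ {ψ | T ⊆ KSZset F L ψ} := by
  rw [convex_iff_forall_pos]
  intro ψ hψ φ hφ a b ha hb hab σ hσ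
  obtain ⟨hσF, x, hx, hxL⟩ := (kz_mem hF).1 (hψ hσ)
  obtain ⟨-, y, hy, hyL⟩ := (kz_mem hF).1 (hφ hσ)
  have hP := hF.1 σ hσF
  rw [kz_mem hF]
  refine ⟨hσF, a • x + b • y, kz_ri_add hP (kz_ri_smul hP hx ha) (kz_smul hP hy.1 hb.le), ?_⟩
  have := L.add_mem (L.smul_mem a hxL) (L.smul_mem b hyL)
  convert this using 1
  module

theorem kz_const {m : ℕ} (hF : IsFan F) (hfin : F.Finite) (hcomplete : ⋃₀ F = Set.univ)
    (L : Submodule ℝ (Fin n → ℝ)) (p : (Fin n → ℝ) →ₗ[ℝ] (Fin m → ℝ))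
    (hker : LinearMap.ker p = L) (ψ₀ ψ : Fin n → ℝ) (h : KSZset F L ψ₀ ⊆ KSZset F L ψ) :
    KSZset F L ψ = KSZset F L ψ₀ := by
  set T := KSZset F L ψ₀ with hT
  have hpc : Continuous p := p.continuous_of_finiteDimensional
  have hpre := (kz_conv hF L T).isPreconnected
  let B : Set (Fin n → ℝ) := ⋃ σ ∈ {σ | σ ∈ F ∧ ∀ ρ ∈ T, ¬ ρ ⊆ σ}, p ⁻¹' (p '' σ)
  have hB : IsClosed B := by
    refine (hfin.subset fun σ hσ => hσ.1).isClosed_biUnion fun σ hσ => ?_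
    obtain ⟨s, hs⟩ := hF.1 σ hσ.1
    rw [hs]
    exact (kz_coneGen_image_closed p s).preimage hpc
  have hEu : ∀ φ, KSZset F L φ = T → φ ∈ Bᶜ := by
    intro φ hφ hmem
    simp only [B, Set.mem_iUnion] at hmem
    obtain ⟨σ, ⟨hσ, hno⟩, y, hy, hpy⟩ := hmem
    obtain ⟨ρ, hρ, hyρ⟩ := kz_cell hF hfin hcomplete y
    refine hno ρ ?_ (kz_ri_sub hF hρ hσ hyρ hy)
    rw [← hφ, kz_mem hF]
    refine ⟨hρ, y, hyρ, ?_⟩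
    rw [← hker, LinearMap.mem_ker, map_sub, hpy, sub_self]
  have huE : ∀ φ, T ⊆ KSZset F L φ → φ ∈ Bᶜ → KSZset F L φ = T := by
    intro φ hTφ hφ
    refine Set.Subset.antisymm (fun σ hσ => ?_) hTφ
    obtain ⟨hσF, x, hx, hxL⟩ := (kz_mem hF).1 hσ
    by_cases hc : ∃ ρ ∈ T, ρ ⊆ σ
    · obtain ⟨ρ, hρ, hsub⟩ := hc
      exact kz_star hF hsub hρ (hTφ hρ) hσ
    · exfalso
      apply hφ
      push Not at hc
      simp only [B, Set.mem_iUnion]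
      refine ⟨σ, ⟨hσF, hc⟩, x, hx.1, ?_⟩
      rw [← hker, LinearMap.mem_ker, map_sub, sub_eq_zero] at hxL
      exact hxL
  by_contra hne
  have hv : ψ ∈ (closure {z | KSZset F L z = T})ᶜ := fun hcl =>
    hne (kz_closed_step' hF hfin hcomplete L T hcl h)
  obtain ⟨z, hzS, hzu, hzv⟩ := hpre Bᶜ (closure {z | KSZset F L z = T})ᶜ hB.isOpen_compl
    isClosed_closure.isOpen_compl (fun z hz => by
      by_cases hcl : z ∈ closure {z | KSZset F L z = T}
      · exact Or.inl (hEu z (kz_closed_step' hF hfin hcomplete L T hcl hz))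
      · exact Or.inr hcl) ⟨ψ₀, hT.le, hEu _ rfl⟩ ⟨ψ, h, hv⟩
  exact hzv (subset_closure (huE z hzS hzu))

end fan

/-- if `N(ψ₀) = {τ₀, …, τ_N}`, then for every `ψ` such that `ψ + L` meets
the relative interior of all the `τᵢ`, the set `N(ψ)` equals `N(ψ₀)`; consequently the
common image `p ψ` lies in the relative interior of the corresponding cone
`τ = p(closure of the equivalence class of ψ₀)` of the quotient fan. -/
theorem KSZset_locally_constant {n m N : ℕ}
    (F : Set (Set (Fin n → ℝ))) (hF : IsFan F) (hfin : F.Finite)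
    (hrat : ∀ σ ∈ F, IsRatPolyCone σ) (hcomplete : ⋃₀ F = Set.univ)
    (L : Submodule ℝ (Fin n → ℝ))
    (p : (Fin n → ℝ) →ₗ[ℝ] (Fin m → ℝ))
    (hp : Function.Surjective p) (hker : LinearMap.ker p = L)
    (τ : Fin (N + 1) → Set (Fin n → ℝ)) (hτF : ∀ i, τ i ∈ F)
    (ψ₀ : Fin n → ℝ)
    (hψ₀ : KSZset F L ψ₀ = {σ | ∃ i, σ = τ i}) :
    ∀ ψ : Fin n → ℝ,
      (∀ i, ∃ x, (∃ l ∈ L, x = ψ + l) ∧ x ∈ intrinsicInterior ℝ (τ i)) →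
      KSZset F L ψ = KSZset F L ψ₀ ∧
      p ψ ∈ intrinsicInterior ℝ (p '' closure {ψ' | KSZset F L ψ' = KSZset F L ψ₀}) := by
  intro ψ hψ
  have hsub : KSZset F L ψ₀ ⊆ KSZset F L ψ := by
    rw [hψ₀]
    rintro _ ⟨i, rfl⟩
    obtain ⟨x, hx, hxi⟩ := hψ i
    exact ⟨hτF i, x, hxi, hx⟩
  refine ⟨kz_const hF hfin hcomplete L p hker ψ₀ ψ hsub, ?_⟩
  set E := {ψ' | KSZset F L ψ' = KSZset F L ψ₀} with hE
  have hES : E = {φ | KSZset F L ψ₀ ⊆ KSZset F L φ} := by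
    ext φ
    exact ⟨fun h => (show KSZset F L φ = KSZset F L ψ₀ from h).ge,
      fun h => kz_const hF hfin hcomplete L p hker ψ₀ φ h⟩
  have hEconv : Convex ℝ E := hES ▸ kz_conv hF L _
  have hpc : Continuous p := p.continuous_of_finiteDimensional
  rw [kz_ii_iff (hEconv.closure.linear_image p)]
  refine ⟨⟨ψ, subset_closure (hES ▸ hsub), rfl⟩, ?_⟩
  rintro _ ⟨e, he, rfl⟩
  have hstep : ∀ i, ∃ ε > (0:ℝ), ∀ δ, 0 < δ → δ ≤ ε → τ i ∈ KSZset F L (ψ + δ • (ψ - e)) := by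
    intro i
    have hP := hF.1 _ (hτF i)
    obtain ⟨-, x, hx, hxL⟩ := (kz_mem hF).1 (hsub (hψ₀ ▸ ⟨i, rfl⟩ : τ i ∈ KSZset F L ψ₀))
    have hcl : IsClosed (p ⁻¹' (p '' τ i)) := by
      obtain ⟨s, hs⟩ := hP
      rw [hs]
      exact (kz_coneGen_image_closed p s).preimage hpc
    have hEsub : E ⊆ p ⁻¹' (p '' τ i) := by
      intro φ hφ
      have hφ : KSZset F L φ = KSZset F L ψ₀ := hφ
      obtain ⟨-, y, hy, hyL⟩ := (kz_mem hF).1 (hφ ▸ hψ₀ ▸ ⟨i, rfl⟩ : τ i ∈ KSZset F L φ)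
      refine ⟨y, hy.1, ?_⟩
      rwa [← hker, LinearMap.mem_ker, map_sub, sub_eq_zero] at hyL
    obtain ⟨t, ht, hpt⟩ := closure_minimal hEsub hcl he
    have htL : t - e ∈ L := by rw [← hker, LinearMap.mem_ker, map_sub, hpt, sub_self]
    obtain ⟨ε, hε, h⟩ := hx.2 t ht
    refine ⟨ε, hε, fun δ hδ hδε => (kz_mem hF).2 ⟨hτF i, _,
      kz_ri_add hP (kz_ri_smul hP hx hδ) (kz_shrink hP ht h hδε), ?_⟩⟩
    have := L.add_mem hxL (L.smul_mem δ (L.sub_mem hxL htL))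
    convert this using 1
    module
  choose ε hε hmem using hstep
  obtain ⟨j, -, hj⟩ := Finset.exists_min_image Finset.univ ε Finset.univ_nonempty
  refine ⟨ε j, hε j, ψ + ε j • (ψ - e), subset_closure ?_, by simp⟩
  rw [hES]
  show KSZset F L ψ₀ ⊆ _
  rw [hψ₀]
  rintro _ ⟨i, rfl⟩
  exact hmem i _ (hε j) (hj i (Finset.mem_univ i))
end
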